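/- Let n ≥ 2 and 2 ≤ m ≤ n. The minimal length of a word w over {a, b} for which there exists a state q ∈ Z_n with |δ_w⁻¹({q})| ≥ m in the Černý automaton C_n is exactly (m−2)·n + 1. That is: there is a word of length (m−2)n + 1 and a state whose preimage under that word has at least m elements, and no word of length strictly less than (m−2)n + 1 has a singleton preimage of cardinality m or more. -/

import Mathlib

/-- The two-letter alphabet of the Černý automaton. -/
inductive Letter
  | a
  | b
deriving DecidableEq

/-- The action of a letter of the Černý automaton `C_n` on the state set `ZMod n`:
`a` sends `i` to `i + 1 (mod n)`, and `b` sends `n - 1` to `0` and fixes every other state. -/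
def step (n : ℕ) : Letter → ZMod n → ZMod n
  | Letter.a, p => p + 1
  | Letter.b, p => if p = -1 then 0 else p

/-- The map `δ_w` induced by a word `w`, applying letters left to right. -/
def run (n : ℕ) : List Letter → ZMod n → ZMod n
  | [], p => p
  | x :: w, p => run n w (step n x p)

theorem run_append_aux (n : ℕ) (u v : List Letter) (p : ZMod n) :
    run n (u ++ v) p = run n v (run n u p) := by
  induction u generalizing p with
  | nil => rfl
  | cons x u ih => simp only [List.cons_append, run, ih]

theorem run_rep_aux (n k : ℕ) (p : ZMod n) :
    run n (List.replicate k Letter.a) p = p + k := by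
  induction k generalizing p with
  | zero => simp [run]
  | succ k ih =>
    simp only [List.replicate_succ, run, ih, step]
    push_cast
    ring

theorem upper_aux (n : ℕ) (hn : 2 ≤ n) (k : ℕ) :
    ∃ w : List Letter, w.length = k * n + 1 ∧
      ∀ i : ℕ, i ≤ k + 1 → run n w ((i : ZMod n) - 1) = 0 := by
  induction k with
  | zero =>
    refine ⟨[Letter.b], by simp, ?_⟩
    intro i hi
    have : i = 0 ∨ i = 1 := by omega
    rcases this with rfl | rfl <;> simp [run, step]
  | succ k ih =>
    obtain ⟨w, hw, h⟩ := ih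
    refine ⟨Letter.b :: (List.replicate (n - 1) Letter.a ++ w), ?_, ?_⟩
    · simp only [List.length_cons, List.length_append, List.length_replicate, hw]
      have : (k + 1) * n = k * n + n := by ring
      omega
    · intro i hi
      have hc : ((n - 1 : ℕ) : ZMod n) = -1 := by
        rw [Nat.cast_sub (by omega)]; simp
      simp only [run, run_append_aux, run_rep_aux, hc, step]
      split_ifs with h1
      · have := h 0 (by omega)
        simpa using this
      · rcases i with _ | i
        · simp at h1
        · have := h i (by omega)
          push_cast
          rw [← this]
          congr 1
          ring

theorem lower_aux (n : ℕ) (hn : 2 ≤ n) (w : List Letter) (q : ZMod n) :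
    ∃ s L : ℕ, s < n ∧ L * n ≤ w.length + s ∧
      ∀ p : ZMod n, run n w p = q → ∃ i : ℕ, i ≤ L ∧ p = (s : ZMod n) + i := by
  haveI : NeZero n := ⟨by omega⟩
  have hc : ((n - 1 : ℕ) : ZMod n) = -1 := by
    rw [Nat.cast_sub (by omega)]; simp
  induction w with
  | nil =>
    refine ⟨q.val, 0, ZMod.val_lt q, by simp, ?_⟩
    intro p hp
    refine ⟨0, le_rfl, ?_⟩
    simpa [run] using hp
  | cons x w ih =>
    obtain ⟨s, L, hs, hL, h⟩ := ih
    cases x with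
    | a =>
      rcases s with _ | s
      · refine ⟨n - 1, L, by omega, by simp only [List.length_cons]; omega, ?_⟩
        intro p hp
        obtain ⟨i, hi, e⟩ := h (p + 1) hp
        refine ⟨i, hi, ?_⟩
        rw [hc, eq_sub_of_add_eq e]
        push_cast
        ring
      · refine ⟨s, L, by omega, by simp only [List.length_cons]; omega, ?_⟩
        intro p hp
        obtain ⟨i, hi, e⟩ := h (p + 1) hp
        refine ⟨i, hi, ?_⟩
        rw [eq_sub_of_add_eq e]
        push_cast
        ring
    | b =>
      rcases Nat.eq_zero_or_pos s with rfl | hpos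
      · refine ⟨n - 1, L + 1, by omega, ?_, ?_⟩
        · simp only [List.length_cons]
          have : (L + 1) * n = L * n + n := by ring
          omega
        intro p hp
        by_cases h1 : p = -1
        · exact ⟨0, by omega, by rw [hc, h1]; simp⟩
        · obtain ⟨i, hi, e⟩ := h p (by simpa [run, step, h1] using hp)
          refine ⟨i + 1, by omega, ?_⟩
          rw [hc, e]
          push_cast
          ring
      · refine ⟨s, L, hs, by simp only [List.length_cons]; omega, ?_⟩
        intro p hp
        by_cases h1 : p = -1
        · obtain ⟨i, hi, e⟩ := h 0 (by simpa [run, step, h1] using hp)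
          rcases i with _ | i
          · exfalso
            have e' : ((s : ℕ) : ZMod n) = 0 := by simpa using e.symm
            rw [ZMod.natCast_eq_zero_iff] at e'
            exact absurd (Nat.le_of_dvd hpos e') (by omega)
          · refine ⟨i, by omega, ?_⟩
            rw [h1]
            push_cast at e
            linear_combination e
        · exact h p (by simpa [run, step, h1] using hp)

/-- For `n ≥ 2` and `2 ≤ m ≤ n`, the minimal length of a word `w` over `{a, b}` for which
some state `q` of the Černý automaton `C_n` has `|δ_w⁻¹({q})| ≥ m` is exactly
`(m - 2) · n + 1`: such a word of length `(m - 2) · n + 1` exists, and no strictly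
shorter word has a singleton preimage with `m` or more elements. -/
theorem cerny_minimal_length_preimage (n m : ℕ) (hn : 2 ≤ n) (hm2 : 2 ≤ m) (hmn : m ≤ n) :
    (∃ w : List Letter, w.length = (m - 2) * n + 1 ∧
      ∃ q : ZMod n, m ≤ {p : ZMod n | run n w p = q}.ncard) ∧
    (∀ w : List Letter, w.length < (m - 2) * n + 1 →
      ∀ q : ZMod n, {p : ZMod n | run n w p = q}.ncard < m) := by
  haveI : NeZero n := ⟨by omega⟩
  constructor
  · obtain ⟨w, hw, h⟩ := upper_aux n hn (m - 2)
    refine ⟨w, hw, 0, ?_⟩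
    have hinj : Set.InjOn (fun i : ℕ => (i : ZMod n) - 1) (Finset.range m : Set ℕ) := by
      intro i hi j hj e
      simp only [Finset.coe_range, Set.mem_Iio] at hi hj
      have e' : (i : ZMod n) = j := sub_left_injective e
      rw [ZMod.natCast_eq_natCast_iff'] at e'
      rwa [Nat.mod_eq_of_lt (by omega), Nat.mod_eq_of_lt (by omega)] at e'
    have hcard := Finset.card_image_of_injOn hinj
    rw [Finset.card_range] at hcard
    rw [← hcard, ← Set.ncard_coe_finset]
    refine Set.ncard_le_ncard ?_ (Set.toFinite _)
    intro p hp
    simp only [Finset.coe_image, Set.mem_image, Finset.coe_range, Set.mem_Iio] at hp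
    obtain ⟨i, hi, rfl⟩ := hp
    exact h i (by omega)
  · intro w hw q
    obtain ⟨s, L, hs, hL, h⟩ := lower_aux n hn w q
    have hle : {p : ZMod n | run n w p = q}.ncard ≤ L + 1 := by
      have h2 : ((Finset.range (L + 1)).image (fun i : ℕ => (s : ZMod n) + i)).card ≤ L + 1 := by
        simpa using Finset.card_image_le (s := Finset.range (L + 1))
          (f := fun i : ℕ => (s : ZMod n) + i)
      refine le_trans ?_ h2
      rw [← Set.ncard_coe_finset]
      refine Set.ncard_le_ncard ?_ (Set.toFinite _)
      intro p hp
      obtain ⟨i, hi, e⟩ := h p hp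
      simp only [Finset.coe_image, Set.mem_image, Finset.coe_range, Set.mem_Iio]
      exact ⟨i, by omega, e.symm⟩
    by_contra hcon
    obtain ⟨k, rfl⟩ : ∃ k, m = k + 2 := ⟨m - 2, by omega⟩
    have h3 : (k + 1) * n ≤ L * n := Nat.mul_le_mul_right n (by omega)
    have h4 : (k + 1) * n = k * n + n := by ring
    simp only [Nat.add_sub_cancel] at hw
    omega
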